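/- Fix m ∈ (1,2) and β ∈ (0,1). There exist constants C < ∞ and ε₀ > 0 such that for all w, z ∈ bD_m with w ≠ z and all 0 < ε < ε₀: | Δ(w, z+εN(z))^{−2} − Δ(w,z)^{−2} | ≤ C · ε^β · |w−z|^{−(4+2β)}. -/

import Mathlib

open MeasureTheory Complex
open scoped ENNReal

noncomputable section

/-- `ℂ²` with the Euclidean metric. -/
abbrev C2 := EuclideanSpace ℂ (Fin 2)

instance : MeasurableSpace C2 := borel _
instance : BorelSpace C2 := ⟨rfl⟩

/-- The defining function `ρ(w) = |w₂|² + |Re w₁|^m + (Im w₁)² − 1`. -/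
def rhom (m : ℝ) (w : C2) : ℝ := ‖w 1‖ ^ 2 + |(w 0).re| ^ m + (w 0).im ^ 2 - 1

/-- The domain `D_m = {ρ < 0}`. -/
def Dm (m : ℝ) : Set C2 := {w | rhom m w < 0}

/-- The boundary `bD_m = {ρ = 0}`. -/
def bDm (m : ℝ) : Set C2 := {w | rhom m w = 0}

/-- The Cauchy–Leray denominator
`Δ(w,z) = ((m/2)|u₁|^{m−1}·sgn(u₁) − i v₁)(w₁−z₁) + conj(w₂)(w₂−z₂)`. -/
def Deltam (m : ℝ) (w z : C2) : ℂ :=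
  ((m / 2 * |(w 0).re| ^ (m - 1) * Real.sign (w 0).re : ℝ) - I * ((w 0).im : ℂ))
      * (w 0 - z 0)
    + (starRingEnd ℂ) (w 1) * (w 1 - z 1)

/-- The real gradient `∇ρ` on `ℝ⁴ ≅ ℂ²`, written as a vector in `ℂ²`:
`∇ρ(w) = (m|u₁|^{m−1} sgn(u₁) + 2i v₁, 2w₂)`. -/
def gradRhom (m : ℝ) (w : C2) : C2 :=
  (WithLp.equiv 2 (Fin 2 → ℂ)).symm
    ![(m * |(w 0).re| ^ (m - 1) * Real.sign (w 0).re : ℝ)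
        + (2 * (w 0).im : ℝ) * I, 2 * w 1]

/-- The inward unit normal `N(z) = −∇ρ(z)/|∇ρ(z)|`. -/
def Nm (m : ℝ) (z : C2) : C2 := (-‖gradRhom m z‖⁻¹ : ℝ) • gradRhom m z

def Gm (m u : ℝ) : ℝ := |u| ^ (m - 1) * Real.sign u

lemma Gm_pos {m u : ℝ} (hu : 0 < u) : Gm m u = u ^ (m - 1) := by
  simp [Gm, Real.sign_of_pos hu, abs_of_pos hu]

lemma Gm_neg (m u : ℝ) : Gm m (-u) = - Gm m u := by
  simp [Gm, Real.sign_neg]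

lemma Gm_zero (m : ℝ) : Gm m 0 = 0 := by
  simp [Gm, Real.sign_zero]

lemma Gm_nonneg {m u : ℝ} (hu : 0 ≤ u) : 0 ≤ Gm m u := by
  rcases hu.eq_or_lt with h | h
  · rw [← h, Gm_zero]
  · rw [Gm_pos h]; positivity

lemma Gm_abs_le {m u : ℝ} (hm : 1 < m) : |Gm m u| ≤ |u| ^ (m - 1) := by
  rcases lt_trichotomy u 0 with h | h | h
  · simp [Gm, Real.sign_of_neg h, abs_of_nonneg (Real.rpow_nonneg (abs_nonneg u) (m-1))]
  · subst h; simp [Gm_zero]; positivity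
  · simp [Gm, Real.sign_of_pos h, abs_of_nonneg (Real.rpow_nonneg (abs_nonneg u) (m-1))]

lemma Gm_mono_nonneg {m x y : ℝ} (hm1 : 1 < m) (hm2 : m < 2) (hx : 0 ≤ x) (hxy : x ≤ y)
    (hy : y ≤ 1) : (m - 1) * (y - x) ≤ Gm m y - Gm m x := by
  rcases hxy.eq_or_lt with h | h
  · simp [h]
  have hy0 : 0 < y := lt_of_le_of_lt hx h
  have hGx : Gm m x ≤ x ^ (m - 1) := by
    rcases hx.eq_or_lt with h0 | h0
    · rw [← h0, Gm_zero]; positivity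
    · rw [Gm_pos h0]
  rw [Gm_pos hy0]
  have hb := rpow_one_add_le_one_add_mul_self (s := x / y - 1) (p := m - 1)
    (by have : 0 ≤ x / y := by positivity
        linarith) (by linarith) (by linarith)
  have e : 1 + (x / y - 1) = x / y := by ring
  rw [e, Real.div_rpow hx hy0.le, div_le_iff₀ (by positivity)] at hb
  have h1 : y ≤ y ^ (m - 1) := by
    have := Real.rpow_le_rpow_of_exponent_ge hy0 hy (show m - 1 ≤ 1 by linarith)
    simpa using this
  have h2 : (m - 1) * (y - x) ≤ (m - 1) * (1 - x / y) * y ^ (m - 1) := by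
    have h3 : (m - 1) * (y - x) = (m - 1) * (1 - x / y) * y := by field_simp
    rw [h3]
    apply mul_le_mul_of_nonneg_left h1
    have : x / y ≤ 1 := by rw [div_le_one hy0]; exact hxy
    apply mul_nonneg <;> linarith
  nlinarith

lemma Gm_mono {m x y : ℝ} (hm1 : 1 < m) (hm2 : m < 2) (hx : -1 ≤ x) (hxy : x ≤ y)
    (hy : y ≤ 1) : (m - 1) * (y - x) ≤ Gm m y - Gm m x := by
  rcases le_total 0 x with h | h
  · exact Gm_mono_nonneg hm1 hm2 h hxy hy
  rcases le_total 0 y with h' | h'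
  · have h1 := Gm_mono_nonneg hm1 hm2 le_rfl h' hy
    have h2 := Gm_mono_nonneg hm1 hm2 le_rfl (show 0 ≤ -x by linarith) (by linarith)
    rw [Gm_neg] at h2
    rw [Gm_zero] at h1 h2
    linarith
  · have h2 := Gm_mono_nonneg hm1 hm2 (show 0 ≤ -y by linarith) (show -y ≤ -x by linarith)
      (by linarith)
    rw [Gm_neg, Gm_neg] at h2
    linarith

lemma Gm_hasDeriv {m : ℝ} (hm1 : 1 < m) (x : ℝ) :
    HasDerivAt (fun x : ℝ => |x| ^ m) (m * Gm m x) x := by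
  have h := hasDerivAt_abs_rpow x hm1
  convert h using 1
  rw [Gm, mul_assoc]
  congr 1
  rcases lt_trichotomy x 0 with h | h | h
  · have h' : 0 < |x| := abs_pos.2 h.ne
    rw [show m - 1 = (m - 2) + 1 by ring, Real.rpow_add h', Real.sign_of_neg h, Real.rpow_one,
      abs_of_neg h]; ring
  · simp [h, Real.sign_zero]
  · have h' : 0 < |x| := abs_pos.2 h.ne'
    rw [show m - 1 = (m - 2) + 1 by ring, Real.rpow_add h', Real.sign_of_pos h, Real.rpow_one,
      abs_of_pos h]; ring

lemma bregman {m x u : ℝ} (hm1 : 1 < m) (hm2 : m < 2) (hx : |x| ≤ 1) (hu : |u| ≤ 1) :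
    m * (m - 1) / 2 * (x - u) ^ 2 ≤ |x| ^ m - |u| ^ m - m * Gm m u * (x - u) := by
  rw [abs_le] at hx hu
  set φ : ℝ → ℝ := fun t => |t| ^ m - |u| ^ m - m * Gm m u * (t - u)
    - m * (m - 1) / 2 * (t - u) ^ 2 with hφ
  have hd : ∀ t, HasDerivAt φ (m * Gm m t - m * Gm m u - m * (m - 1) * (t - u)) t := by
    intro t
    have h1 := (Gm_hasDeriv hm1 t).sub_const (|u| ^ m)
    have h2 := ((hasDerivAt_id t).sub_const u)
    have h3 := (h1.sub (h2.const_mul (m * Gm m u))).sub ((h2.pow 2).const_mul (m * (m - 1) / 2))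
    refine (h3.congr_deriv ?_ : HasDerivAt φ _ t)
    simp; ring
  have hφu : φ u = 0 := by simp [hφ]
  have hc : Continuous φ := continuous_iff_continuousAt.2 fun t => (hd t).continuousAt
  suffices h : 0 ≤ φ x by simp only [hφ] at h; linarith
  rcases le_total u x with hux | hux
  · have : MonotoneOn φ (Set.Icc u 1) := by
      apply monotoneOn_of_deriv_nonneg (convex_Icc _ _) hc.continuousOn
        (fun t _ => (hd t).differentiableAt.differentiableWithinAt)
      intro t ht
      rw [interior_Icc] at ht
      rw [(hd t).deriv]
      have := Gm_mono hm1 hm2 hu.1 ht.1.le ht.2.le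
      nlinarith
    have := this ⟨le_rfl, hu.2⟩ ⟨hux, hx.2⟩ hux
    linarith
  · have : AntitoneOn φ (Set.Icc (-1) u) := by
      apply antitoneOn_of_deriv_nonpos (convex_Icc _ _) hc.continuousOn
        (fun t _ => (hd t).differentiableAt.differentiableWithinAt)
      intro t ht
      rw [interior_Icc] at ht
      rw [(hd t).deriv]
      have := Gm_mono hm1 hm2 ht.1.le ht.2.le hu.2
      nlinarith
    have := this ⟨hx.1, hux⟩ ⟨hu.1, le_rfl⟩ hux
    linarith

/-- lower bound on product of gradients -/
lemma Gm_prod {m : ℝ} (hm1 : 1 < m) (hm2 : m < 2) : ∃ K : ℝ, 0 < K ∧ ∀ u x : ℝ, |u| ≤ 1 → |x| ≤ 1 →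
    - K * (u - x) ^ 2 ≤ m ^ 2 * (Gm m u * Gm m x) + 2 * (1 - |u| ^ m) + 2 * (1 - |x| ^ m) := by
  set δ : ℝ := (1 / 2) ^ (1 / (2 * m - 2)) with hδ
  have hδ0 : 0 < δ := by positivity
  have hδp : δ ^ (2 * m - 2) = 1 / 2 := by
    rw [hδ, ← Real.rpow_mul (by norm_num), one_div_mul_cancel (by linarith), Real.rpow_one]
  have hδ1 : δ ≤ 1 := Real.rpow_le_one (by norm_num) (by norm_num)
    (by apply one_div_nonneg.2; linarith)
  refine ⟨4 / δ ^ 2, by positivity, ?_⟩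
  intro u x hu hx
  have hu1 : |u| ^ m ≤ 1 := Real.rpow_le_one (abs_nonneg _) hu (by linarith)
  have hx1 : |x| ^ m ≤ 1 := Real.rpow_le_one (abs_nonneg _) hx (by linarith)
  have hK : 0 ≤ 4 / δ ^ 2 * (u - x) ^ 2 := by positivity
  by_cases hs : 0 ≤ Gm m u * Gm m x
  · nlinarith [mul_nonneg (sq_nonneg m) hs]
  have hau := Gm_abs_le (u := u) hm1
  have hax := Gm_abs_le (u := x) hm1
  have hm4 : m ^ 2 ≤ 4 := by nlinarith
  have hprod : -(|u| ^ (m-1) * |x| ^ (m-1)) ≤ Gm m u * Gm m x := by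
    have := mul_le_mul hau hax (abs_nonneg _) (by positivity)
    rw [← abs_mul] at this
    linarith [neg_abs_le (Gm m u * Gm m x)]
  have hux : |u| ≤ |u - x| ∧ |x| ≤ |u - x| := by
    rcases le_total 0 u with h1 | h1 <;> rcases le_total 0 x with h2 | h2
    · exact absurd (mul_nonneg (Gm_nonneg h1) (Gm_nonneg h2)) hs
    · rw [abs_of_nonneg h1, abs_of_nonpos h2, abs_of_nonneg (by linarith)]
      constructor <;> linarith
    · rw [abs_of_nonneg h2, abs_of_nonpos h1, abs_of_nonpos (by linarith)]
      constructor <;> linarith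
    · have a := Gm_nonneg (m := m) (show 0 ≤ -u by linarith)
      have b := Gm_nonneg (m := m) (show 0 ≤ -x by linarith)
      have c := mul_nonneg a b
      rw [Gm_neg, Gm_neg, neg_mul_neg] at c
      exact absurd c hs
  rcases le_total δ |u - x| with h | h
  · have h1 : |u| ^ (m-1) ≤ 1 := Real.rpow_le_one (abs_nonneg _) hu (by linarith)
    have h2 : |x| ^ (m-1) ≤ 1 := Real.rpow_le_one (abs_nonneg _) hx (by linarith)
    have h3 : |u| ^ (m-1) * |x| ^ (m-1) ≤ 1 := mul_le_one₀ h1 (by positivity) h2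
    have h4 : 4 ≤ 4 / δ ^ 2 * (u - x) ^ 2 := by
      have : δ ^ 2 ≤ (u - x) ^ 2 := by rw [← sq_abs (u - x)]; gcongr
      rw [div_mul_eq_mul_div, le_div_iff₀ (by positivity)]; linarith
    nlinarith
  · have h1 : |u| ^ (m-1) ≤ δ ^ (m-1) :=
      Real.rpow_le_rpow (abs_nonneg _) (hux.1.trans h) (by linarith)
    have h2 : |x| ^ (m-1) ≤ δ ^ (m-1) :=
      Real.rpow_le_rpow (abs_nonneg _) (hux.2.trans h) (by linarith)
    have h3 : |u| ^ (m-1) * |x| ^ (m-1) ≤ 1 / 2 := by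
      calc _ ≤ δ ^ (m-1) * δ ^ (m-1) := by gcongr
        _ = 1 / 2 := by rw [← Real.rpow_add hδ0, ← hδp]; congr 1; ring
    have h0 : δ ^ m ≤ 1 / 2 := by
      rw [← hδp]; exact Real.rpow_le_rpow_of_exponent_ge hδ0 hδ1 (by linarith)
    have h4 : |u| ^ m ≤ δ ^ m :=
      Real.rpow_le_rpow (abs_nonneg _) (hux.1.trans h) (by linarith)
    have h5 : |x| ^ m ≤ δ ^ m :=
      Real.rpow_le_rpow (abs_nonneg _) (hux.2.trans h) (by linarith)
    nlinarith

lemma final_est {κ M β ε r : ℝ} (a b : ℂ) (hκ : 0 < κ) (hM : 0 < M) (hβ0 : 0 < β) (hβ1 : β < 1)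
    (hε : 0 < ε) (hr : 0 < r) (ha : κ * r ^ 2 ≤ ‖a‖) (hb : κ * r ^ 2 ≤ ‖b‖)
    (hab : ‖a - b‖ ≤ M * ε) :
    ‖(a ^ 2)⁻¹ - (b ^ 2)⁻¹‖ ≤ (2 * M / κ ^ 3 + 2 / κ ^ 2) * ε ^ β * r ^ (-(4 + 2 * β)) := by
  have hk : 0 < κ * r ^ 2 := by positivity
  have ha0 : a ≠ 0 := by rw [← norm_pos_iff]; linarith
  have hb0 : b ≠ 0 := by rw [← norm_pos_iff]; linarith
  have hia : ‖a⁻¹‖ ≤ (κ * r ^ 2)⁻¹ := by rw [norm_inv]; gcongr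
  have hib : ‖b⁻¹‖ ≤ (κ * r ^ 2)⁻¹ := by rw [norm_inv]; gcongr
  have hrr : r ^ (-(4 + 2 * β)) = (r ^ 4)⁻¹ * ((r ^ 2) ^ β)⁻¹ := by
    rw [Real.rpow_neg hr.le, Real.rpow_add hr, mul_inv, Real.rpow_mul hr.le]
    norm_cast
  have e : (2 * M / κ ^ 3 + 2 / κ ^ 2) * ε ^ β * r ^ (-(4 + 2 * β))
      = (2 * M / κ ^ 3 + 2 / κ ^ 2) * (r ^ 4)⁻¹ * (ε / r ^ 2) ^ β := by
    rw [hrr, Real.div_rpow hε.le (by positivity)]; ring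
  rw [e]
  rcases le_total (ε / r ^ 2) 1 with h | h
  · have h1 : ε / r ^ 2 ≤ (ε / r ^ 2) ^ β := by
      have := Real.rpow_le_rpow_of_exponent_ge (show 0 < ε / r ^ 2 by positivity) h hβ1.le
      simpa using this
    have e1 : (a ^ 2)⁻¹ - (b ^ 2)⁻¹ = (b - a) * (a⁻¹ * b⁻¹ * (a⁻¹ + b⁻¹)) := by
      field_simp; ring
    rw [e1, norm_mul, norm_mul, norm_mul, norm_sub_rev]
    calc _ ≤ M * ε * ((κ * r ^ 2)⁻¹ * (κ * r ^ 2)⁻¹ * ((κ * r ^ 2)⁻¹ + (κ * r ^ 2)⁻¹)) := by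
          gcongr
          exact (norm_add_le _ _).trans (add_le_add hia hib)
      _ = (2 * M / κ ^ 3) * (r ^ 4)⁻¹ * (ε / r ^ 2) := by field_simp; ring
      _ ≤ _ := by
          gcongr
          have : 0 < 2 / κ ^ 2 := by positivity
          linarith
  · have h1 : 1 ≤ (ε / r ^ 2) ^ β := Real.one_le_rpow h hβ0.le
    calc _ ≤ ‖a⁻¹‖ ^ 2 + ‖b⁻¹‖ ^ 2 := by
          refine (norm_sub_le _ _).trans ?_
          simp
      _ ≤ (κ * r ^ 2)⁻¹ ^ 2 + (κ * r ^ 2)⁻¹ ^ 2 := by gcongr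
      _ = (2 / κ ^ 2) * (r ^ 4)⁻¹ * 1 := by field_simp; ring
      _ ≤ _ := by
          gcongr
          have : 0 < 2 * M / κ ^ 3 := by positivity
          linarith

lemma bdm_bounds {m : ℝ} (hm1 : 1 < m) {w : C2} (hw : w ∈ bDm m) :
    |(w 0).re| ^ m + (w 0).im ^ 2 + ((w 1).re ^ 2 + (w 1).im ^ 2) = 1 ∧ |(w 0).re| ≤ 1 := by
  have h : rhom m w = 0 := hw
  rw [rhom, Complex.sq_norm, Complex.normSq_apply] at h
  have h1 : |(w 0).re| ^ m + (w 0).im ^ 2 + ((w 1).re ^ 2 + (w 1).im ^ 2) = 1 := by nlinarith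
  refine ⟨h1, ?_⟩
  by_contra hc
  push Not at hc
  have := Real.one_lt_rpow hc (show 0 < m by linarith)
  nlinarith [sq_nonneg (w 0).im, sq_nonneg (w 1).re, sq_nonneg (w 1).im]

/-- The correction term. -/
def Qm (m : ℝ) (w z : C2) : ℂ :=
  ((m / 2 * Gm m (w 0).re : ℝ) - I * ((w 0).im : ℂ)) *
    ((m * Gm m (z 0).re : ℝ) + (2 * (z 0).im : ℝ) * I) + (starRingEnd ℂ) (w 1) * (2 * z 1)

lemma delta_shift (m : ℝ) (w z : C2) (ε : ℝ) :
    Deltam m w (z + ε • Nm m z) = Deltam m w z + ((ε * ‖gradRhom m z‖⁻¹ : ℝ) : ℂ) * Qm m w z := by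
  have e0 : (ε • Nm m z) 0 = -((ε * ‖gradRhom m z‖⁻¹ : ℝ) : ℂ) *
      ((m * Gm m (z 0).re : ℝ) + (2 * (z 0).im : ℝ) * I) := by
    generalize hn : ‖gradRhom m z‖⁻¹ = n
    simp only [Nm, hn]
    simp [gradRhom, Gm]
    ring
  have e1 : (ε • Nm m z) 1 = -((ε * ‖gradRhom m z‖⁻¹ : ℝ) : ℂ) * (2 * z 1) := by
    generalize hn : ‖gradRhom m z‖⁻¹ = n
    simp only [Nm, hn]
    simp [gradRhom]
    ring
  rw [Deltam, Deltam, PiLp.add_apply, PiLp.add_apply, e0, e1, Qm,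
    show m / 2 * |(w 0).re| ^ (m - 1) * Real.sign (w 0).re = m / 2 * Gm m (w 0).re by
      rw [Gm]; ring]
  ring

lemma delta_re (m : ℝ) (w z : C2) :
    2 * (Deltam m w z).re = m * Gm m (w 0).re * ((w 0).re - (z 0).re)
      + 2 * (w 0).im * ((w 0).im - (z 0).im)
      + 2 * ((w 1).re * ((w 1).re - (z 1).re) + (w 1).im * ((w 1).im - (z 1).im)) := by
  rw [Deltam, show m / 2 * |(w 0).re| ^ (m - 1) * Real.sign (w 0).re = m / 2 * Gm m (w 0).re by
      rw [Gm]; ring]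
  generalize Gm m (w 0).re = g
  simp [-ofReal_mul, -ofReal_div]
  ring

lemma Q_re (m : ℝ) (w z : C2) :
    2 * (Qm m w z).re = m ^ 2 * (Gm m (w 0).re * Gm m (z 0).re) + 4 * (w 0).im * (z 0).im
      + 4 * ((w 1).re * (z 1).re + (w 1).im * (z 1).im) := by
  rw [Qm]
  generalize Gm m (w 0).re = g
  generalize Gm m (z 0).re = g'
  simp [-ofReal_mul, -ofReal_div]
  ring

lemma dist_sq (w z : C2) : ‖w - z‖ ^ 2 = ((w 0).re - (z 0).re) ^ 2 + ((w 0).im - (z 0).im) ^ 2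
    + ((w 1).re - (z 1).re) ^ 2 + ((w 1).im - (z 1).im) ^ 2 := by
  rw [EuclideanSpace.norm_sq_eq, Fin.sum_univ_two, Complex.sq_norm, Complex.sq_norm,
    Complex.normSq_apply, Complex.normSq_apply]
  simp
  ring

lemma Gm_le_one {m u : ℝ} (hm : 1 < m) (hu : |u| ≤ 1) : |Gm m u| ≤ 1 :=
  (Gm_abs_le hm).trans (Real.rpow_le_one (abs_nonneg _) hu (by linarith))

lemma Q_norm {m : ℝ} (hm1 : 1 < m) (hm2 : m < 2) {w z : C2} (hw : w ∈ bDm m) (hz : z ∈ bDm m) :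
    ‖Qm m w z‖ ≤ 10 := by
  obtain ⟨hw1, hw2⟩ := bdm_bounds hm1 hw
  obtain ⟨hz1, hz2⟩ := bdm_bounds hm1 hz
  have gw := Gm_le_one hm1 hw2
  have gz := Gm_le_one hm1 hz2
  have pw : 0 ≤ |(w 0).re| ^ m := by positivity
  have pz : 0 ≤ |(z 0).re| ^ m := by positivity
  have vw : |(w 0).im| ≤ 1 := by
    rw [← sq_le_one_iff_abs_le_one]; nlinarith [sq_nonneg (w 1).re, sq_nonneg (w 1).im]
  have vz : |(z 0).im| ≤ 1 := by
    rw [← sq_le_one_iff_abs_le_one]; nlinarith [sq_nonneg (z 1).re, sq_nonneg (z 1).im]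
  have nw : ‖w 1‖ ≤ 1 := by
    rw [← sq_le_one_iff₀ (norm_nonneg _), Complex.sq_norm, Complex.normSq_apply]
    nlinarith [sq_nonneg (w 0).im]
  have nz : ‖z 1‖ ≤ 1 := by
    rw [← sq_le_one_iff₀ (norm_nonneg _), Complex.sq_norm, Complex.normSq_apply]
    nlinarith [sq_nonneg (z 0).im]
  have h1 : ‖((m / 2 * Gm m (w 0).re : ℝ) : ℂ) - I * ((w 0).im : ℂ)‖ ≤ 2 := by
    refine (norm_sub_le _ _).trans ?_
    rw [norm_mul, Complex.norm_I, Complex.norm_real, Complex.norm_real, Real.norm_eq_abs,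
      Real.norm_eq_abs, abs_mul, abs_of_pos (show 0 < m / 2 by linarith)]
    nlinarith [abs_nonneg (Gm m (w 0).re)]
  have h2 : ‖((m * Gm m (z 0).re : ℝ) : ℂ) + (2 * (z 0).im : ℝ) * I‖ ≤ 4 := by
    refine (norm_add_le _ _).trans ?_
    rw [norm_mul, Complex.norm_I, Complex.norm_real, Complex.norm_real, Real.norm_eq_abs,
      Real.norm_eq_abs, abs_mul, abs_mul, abs_of_pos (show 0 < m by linarith), abs_two]
    nlinarith [abs_nonneg (Gm m (z 0).re)]
  rw [Qm]
  refine (norm_add_le _ _).trans ?_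
  rw [norm_mul, norm_mul, norm_mul, RCLike.norm_conj, RCLike.norm_ofNat]
  have := mul_le_mul h1 h2 (norm_nonneg _) (by norm_num)
  have := mul_le_one₀ nw (norm_nonneg _) nz
  linarith

lemma grad_norm {m : ℝ} (hm1 : 1 < m) (hm2 : m < 2) {z : C2} (hz : z ∈ bDm m) :
    1 ≤ ‖gradRhom m z‖ := by
  obtain ⟨hz1, hz2⟩ := bdm_bounds hm1 hz
  have hg : |(z 0).re| ^ m ≤ (m * Gm m (z 0).re) ^ 2 := by
    rcases eq_or_ne (z 0).re 0 with h | h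
    · rw [h, Gm_zero]; simp [Real.zero_rpow (show m ≠ 0 by linarith)]
    have h' : 0 < |(z 0).re| := abs_pos.2 h
    have e : (Gm m (z 0).re) ^ 2 = |(z 0).re| ^ (2 * m - 2) := by
      have hs : (Real.sign (z 0).re) ^ 2 = 1 := by
        rcases lt_or_gt_of_ne h with h | h
        · simp [Real.sign_of_neg h]
        · simp [Real.sign_of_pos h]
      rw [Gm, mul_pow, hs, mul_one, pow_two, ← Real.rpow_add h']; congr 1; ring
    have h3 := Real.rpow_le_rpow_of_exponent_ge h' hz2 (show 2 * m - 2 ≤ m by linarith)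
    rw [mul_pow, e]
    have : 0 ≤ |(z 0).re| ^ (2 * m - 2) := by positivity
    have hm4 : 1 ≤ m ^ 2 := by nlinarith
    exact h3.trans (le_mul_of_one_le_left this hm4)
  have hn : ‖gradRhom m z‖ ^ 2 = (m * Gm m (z 0).re) ^ 2 + 4 * (z 0).im ^ 2
      + 4 * ((z 1).re ^ 2 + (z 1).im ^ 2) := by
    rw [EuclideanSpace.norm_sq_eq, Fin.sum_univ_two]
    have a0 : gradRhom m z 0 = ((m * Gm m (z 0).re : ℝ) : ℂ) + (2 * (z 0).im : ℝ) * I := by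
      simp [gradRhom, Gm]; ring
    have a1 : gradRhom m z 1 = 2 * z 1 := by simp [gradRhom]
    rw [a0, a1, Complex.sq_norm, Complex.sq_norm, Complex.normSq_add_mul_I, Complex.normSq_apply]
    simp
    ring
  have : 1 ≤ ‖gradRhom m z‖ ^ 2 := by
    rw [hn]; nlinarith [sq_nonneg (z 0).im, sq_nonneg (z 1).re, sq_nonneg (z 1).im]
  exact (one_le_sq_iff₀ (norm_nonneg _)).1 this

lemma delta_lower {m : ℝ} (hm1 : 1 < m) (hm2 : m < 2) {w z : C2} (hw : w ∈ bDm m)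
    (hz : z ∈ bDm m) : (m - 1) / 2 * ‖w - z‖ ^ 2 ≤ 2 * (Deltam m w z).re := by
  obtain ⟨hw1, hw2⟩ := bdm_bounds hm1 hw
  obtain ⟨hz1, hz2⟩ := bdm_bounds hm1 hz
  have hb := bregman hm1 hm2 hz2 hw2
  rw [delta_re, dist_sq]
  have h1 : (m - 1) / 2 * ((w 0).re - (z 0).re) ^ 2 ≤
      m * (m - 1) / 2 * ((z 0).re - (w 0).re) ^ 2 := by
    nlinarith [mul_nonneg (sq_nonneg (m - 1)) (sq_nonneg ((z 0).re - (w 0).re))]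
  have h2 : ∀ t : ℝ, (m - 1) / 2 * t ^ 2 ≤ t ^ 2 := fun t => by nlinarith [sq_nonneg t]
  have h3 := h2 ((w 0).im - (z 0).im)
  have h4 := h2 ((w 1).re - (z 1).re)
  have h5 := h2 ((w 1).im - (z 1).im)
  linarith

theorem stmt18 (m β : ℝ) (hm1 : 1 < m) (hm2 : m < 2) (hβ0 : 0 < β) (hβ1 : β < 1) :
    ∃ C ε₀ : ℝ, 0 < ε₀ ∧
      ∀ w ∈ bDm m, ∀ z ∈ bDm m, w ≠ z → ∀ ε : ℝ, 0 < ε → ε < ε₀ →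
        ‖((Deltam m w (z + ε • Nm m z)) ^ 2)⁻¹ - ((Deltam m w z) ^ 2)⁻¹‖
          ≤ C * ε ^ β * ‖w - z‖ ^ (-(4 + 2 * β)) := by
  obtain ⟨K, hK, hKp⟩ := Gm_prod hm1 hm2
  have hκ : 0 < (m - 1) / 8 := by linarith
  refine ⟨2 * 10 / ((m - 1) / 8) ^ 3 + 2 / ((m - 1) / 8) ^ 2, (m - 1) / (4 * (K + 2)),
    div_pos (by linarith) (by linarith), ?_⟩
  intro w hw z hz hwz ε hε hε0
  obtain ⟨hw1, hw2⟩ := bdm_bounds hm1 hw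
  obtain ⟨hz1, hz2⟩ := bdm_bounds hm1 hz
  have hr : 0 < ‖w - z‖ := norm_pos_iff.2 (sub_ne_zero.2 hwz)
  have hD := delta_lower hm1 hm2 hw hz
  have hg := grad_norm hm1 hm2 hz
  have hQ := Q_norm hm1 hm2 hw hz
  have hs0 : 0 ≤ ε * ‖gradRhom m z‖⁻¹ := by positivity
  have hs1 : ε * ‖gradRhom m z‖⁻¹ ≤ ε := mul_le_of_le_one_right hε.le (inv_le_one_of_one_le₀ hg)
  have hshift := delta_shift m w z ε
  set s := ε * ‖gradRhom m z‖⁻¹ with hs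
  have hQr : -(K + 2) * ‖w - z‖ ^ 2 ≤ 2 * (Qm m w z).re := by
    have h1 := hKp _ _ hw2 hz2
    rw [Q_re, dist_sq]
    nlinarith [mul_nonneg hK.le (sq_nonneg ((w 0).im - (z 0).im)),
      mul_nonneg hK.le (sq_nonneg ((w 1).re - (z 1).re)),
      mul_nonneg hK.le (sq_nonneg ((w 1).im - (z 1).im)), sq_nonneg ((w 0).re - (z 0).re)]
  have hr2 : 0 < ‖w - z‖ ^ 2 := by positivity
  apply final_est _ _ hκ (by norm_num) hβ0 hβ1 hε hr
  · refine le_trans ?_ (Complex.re_le_norm _)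
    rw [hshift, Complex.add_re, Complex.re_ofReal_mul]
    rw [lt_div_iff₀ (by linarith)] at hε0
    have h1 : s * (K + 2) ≤ (m - 1) / 4 := by nlinarith
    have h2 := mul_le_mul_of_nonneg_left hQr hs0
    have h3 := mul_le_mul_of_nonneg_right h1 hr2.le
    linarith
  · refine le_trans ?_ (Complex.re_le_norm _)
    nlinarith
  · rw [hshift, add_sub_cancel_left, norm_mul, Complex.norm_real, Real.norm_eq_abs,
      abs_of_nonneg hs0]
    nlinarith [norm_nonneg (Qm m w z)]

end
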